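/- Under the hypotheses of the scaling-function theorem (C repelling; r and #r⁻¹ continuous at the points of C; m_0 β-Lipschitz at the points of C satisfying the quadrature and low-pass conditions), set W(x) = |m_0(x)|² / #r⁻¹(r(x)). Then C is a W-cycle, for every x ∈ X one has Σ_{ω∈N_C(x)} |φ̂(x, ω)|² = h_C(x) where h_C(x) = P_x(N_C(x)) is the harmonic function of the W-cycle C, and consequently ⟨π(f)φ̂, φ̂⟩_{L²(X_∞, λ_C)} = ∫_X f h_C dρ for every f ∈ L^∞(X, ρ). -/

import Mathlib

open MeasureTheory Filter Topology ENNReal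

noncomputable section

abbrev Solenoid {X : Type*} (r : X → X) : Type _ :=
  {z : ℤ → X // ∀ n : ℤ, r (z (n + 1)) = z n}

/-- The shift automorphism `r̂` on the solenoid, `(r̂ z) n = z (n-1)`. -/
def shiftHat {X : Type*} (r : X → X) (z : Solenoid r) : Solenoid r :=
  ⟨fun n => z.1 (n - 1), fun n => by
    have h := z.2 (n - 1)
    have h1 : n - 1 + 1 = n := by ring
    rw [h1] at h
    show r (z.1 (n + 1 - 1)) = z.1 (n - 1)
    have h2 : n + 1 - 1 = n := by ring
    rw [h2]
    exact h⟩

/-- The inverse of the shift automorphism `r̂`. -/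
def shiftHatInv {X : Type*} (r : X → X) (z : Solenoid r) : Solenoid r :=
  ⟨fun n => z.1 (n + 1), fun n => z.2 (n + 1)⟩

/-- Integer powers `r̂^n` of the shift automorphism. -/
def shiftHatZ {X : Type*} (r : X → X) : ℤ → Solenoid r → Solenoid r
  | Int.ofNat n => (shiftHat r)^[n]
  | Int.negSucc n => (shiftHatInv r)^[n + 1]

/-- The function `𝔠(z) = #r⁻¹(r(z₀))` on the solenoid. -/
def cFun {X : Type*} (r : X → X) (z : Solenoid r) : ℝ :=
  Nat.card (r ⁻¹' {r (z.1 0)})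

/-- The cocycle `𝔠⁽ⁿ⁾`: `𝔠⁽⁰⁾ = 1`, `𝔠⁽ⁿ⁾ = 𝔠 ⋯ (𝔠∘r̂^{n-1})` for `n ≥ 1`, and
`𝔠⁽⁻ⁿ⁾ = 1/((𝔠∘r̂⁻¹) ⋯ (𝔠∘r̂⁻ⁿ))` for `n ≥ 1`. -/
def cPow {X : Type*} (r : X → X) : ℤ → Solenoid r → ℝ
  | Int.ofNat n => fun z => ∏ k ∈ Finset.range n, cFun r (shiftHatZ r (k : ℤ) z)
  | Int.negSucc n => fun z =>
      (∏ k ∈ Finset.range (n + 1), cFun r (shiftHatZ r (-(k + 1) : ℤ) z))⁻¹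

/-- The set `N_C(x)` of paths starting at `x` converging to the cycle `C = {xc i}`. -/
def NC {X : Type*} [TopologicalSpace X] (r : X → X) {p : ℕ} (xc : ZMod p → X) (x : X) :
    Set (Solenoid r) :=
  {z | z.1 0 = x ∧ ∃ i : ZMod p, Tendsto (fun n : ℕ => z.1 ((p : ℤ) * (n : ℤ))) atTop (𝓝 (xc i))}

/-- The scaling function `φ̂(x, (z_k)) = ∏_{k=1}^∞ α_{i(ω)+k}⁻¹ m₀(z_k) / √(#r⁻¹(r z_k))`. -/
def scalingFn {X : Type*} (r : X → X) {p : ℕ} (α : ZMod p → ℂ) (ι : Solenoid r → ZMod p)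
    (m0 : X → ℂ) (z : Solenoid r) : ℂ :=
  ∏' k : ℕ, (α (ι z + ((k + 1 : ℕ) : ZMod p)))⁻¹ * m0 (z.1 ((k : ℤ) + 1)) /
    (Real.sqrt (Nat.card (r ⁻¹' {r (z.1 ((k : ℤ) + 1))})) : ℂ)

/-- Admissibility of a finite word `(a 1, …, a n)` as an initial segment of a path in `Ω_x`. -/
def cylOK {X : Type*} (r : X → X) (x : X) (n : ℕ) (a : Fin n → X) : Prop :=
  (∀ h : 0 < n, r (a ⟨0, h⟩) = x) ∧
  ∀ (j : ℕ) (hj : j + 1 < n), r (a ⟨j + 1, hj⟩) = a ⟨j, by omega⟩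

/-- The cylinder set `{(z₁, z₂, …) ∈ Ω_x : z₁ = a 1, …, z_n = a n}`. -/
def cylSet {X : Type*} (r : X → X) (x : X) (n : ℕ) (a : Fin n → X) : Set (Solenoid r) :=
  {ω | ω.1 0 = x ∧ ∀ j : Fin n, ω.1 ((j : ℕ) + 1) = a j}

/-- A family `(P x)` of Borel probability measures supported on `Ω_x`, assigning to each
admissible cylinder the product of the `W`-values of its letters. -/
def IsPathMeasureFamily {X : Type*} [MeasurableSpace X] (r : X → X) (W : X → ℝ≥0∞)
    (P : X → MeasureTheory.Measure (Solenoid r)) : Prop :=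
  (∀ x, MeasureTheory.IsProbabilityMeasure (P x)) ∧
  (∀ x, P x {ω : Solenoid r | ω.1 0 = x} = 1) ∧
  (∀ (x : X) (n : ℕ) (a : Fin n → X), cylOK r x n a →
    P x (cylSet r x n a) = ∏ j : Fin n, W (a j))

/-!
Write `W y = |m₀ y|² / #r⁻¹(r y)`. On the cycle `W = 1` by the low-pass condition. Along a path `ω`
converging to the cycle, repulsion makes the distances to the cycle decay geometrically, so the
`β`-Lipschitz condition makes the product defining `φ̂(ω)` converge unconditionally, and
`|φ̂(ω)|² = ∏ W(z_k)` is the limit of the `P_x`-measures of the cylinders around `ω`, namely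
`P_x {ω}`. Near the cycle `W > 1/2`, and since the weights of a fibre add up to `1`, such a path is
eventually determined by its past; hence `N_C(x)` is countable and summing over it gives
`P_x(N_C(x))`.

The integral formula says that the image of `|φ̂|² λ_C` under `z ↦ z 0` is `h_C ρ`. Fibre averages
of Borel functions need not be Borel a priori; strong invariance itself provides their measurability
up to `ρ`-null sets, and it also ensures that the preimages of `ρ`-null sets under all iterates of
`r` are negligible for the paths over `ρ`-almost every point.
-/

section FiberAverage

variable {X : Type*} {r : X → X}

/-- The average of `f` over the fibre `r ⁻¹' {x}`, that is, the transfer operator with the uniform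
weights of a strongly invariant measure, meant for finite nonempty fibres. -/
def fiberAverage (r : X → X) (f : X → ℝ≥0∞) (x : X) : ℝ≥0∞ :=
  (Nat.card (r ⁻¹' {x}) : ℝ≥0∞)⁻¹ * ∑' y : r ⁻¹' {x}, f y

/-- Strong invariance of `ρ` for `r`: bounded Borel functions have the same integral as their
fibre averages. -/
def IsStronglyInvariant [MeasurableSpace X] (r : X → X) (ρ : Measure X) : Prop :=
  ∀ f : X → ℝ, Measurable f → (∃ M : ℝ, ∀ x, |f x| ≤ M) →
    ∫ x, f x ∂ρ = ∫ x, (Nat.card (r ⁻¹' {x}) : ℝ)⁻¹ * ∑' y : r ⁻¹' {x}, f y.1 ∂ρ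

lemma one_le_card_fiber {x : X} (hfin : (r ⁻¹' {x}).Finite) (hne : (r ⁻¹' {x}).Nonempty) :
    1 ≤ Nat.card (r ⁻¹' {x}) := by
  have := hfin.to_subtype
  have := hne.to_subtype
  exact Nat.card_pos

lemma fiberAverage_eq_zero_iff {f : X → ℝ≥0∞} {x : X} :
    fiberAverage r f x = 0 ↔ ∀ y, r y = x → f y = 0 := by
  simp [fiberAverage]

lemma fiberAverage_add (f g : X → ℝ≥0∞) :
    fiberAverage r (f + g) = fiberAverage r f + fiberAverage r g := by
  ext x
  simp only [fiberAverage, Pi.add_apply, ENNReal.tsum_add, mul_add]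

lemma fiberAverage_const_mul (c : ℝ≥0∞) (f : X → ℝ≥0∞) :
    fiberAverage r (fun y => c * f y) = fun x => c * fiberAverage r f x := by
  ext x
  simp only [fiberAverage, ENNReal.tsum_mul_left, mul_left_comm]

lemma fiberAverage_iSup (hfin : ∀ x, (r ⁻¹' {x}).Finite) {f : ℕ → X → ℝ≥0∞} (hf : Monotone f) :
    fiberAverage r (fun y => ⨆ n, f n y) = fun x => ⨆ n, fiberAverage r (f n) x := by
  ext x
  have := (hfin x).fintype
  simp only [fiberAverage, tsum_fintype, ← ENNReal.mul_iSup]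
  rw [ENNReal.finsetSum_iSup_of_monotone fun y m n hmn => hf hmn y.1]

lemma fiberAverage_indicator_one (hfin : ∀ x, (r ⁻¹' {x}).Finite)
    (hne : ∀ x, (r ⁻¹' {x}).Nonempty) (s : Set X) (x : X) :
    fiberAverage r (s.indicator 1) x = ENNReal.ofReal
      ((Nat.card (r ⁻¹' {x}) : ℝ)⁻¹ * ∑' y : r ⁻¹' {x}, s.indicator (1 : X → ℝ) y.1) := by
  have := (hfin x).fintype
  have hcard : (0 : ℝ) < Nat.card (r ⁻¹' {x}) := mod_cast one_le_card_fiber (hfin x) (hne x)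
  have hnonneg (y : X) : 0 ≤ s.indicator (1 : X → ℝ) y :=
    Set.indicator_nonneg (fun _ _ => zero_le_one) y
  have hterm (y : X) : ENNReal.ofReal (s.indicator (1 : X → ℝ) y) = s.indicator 1 y := by
    by_cases hy : y ∈ s <;> simp [hy]
  rw [fiberAverage, ENNReal.ofReal_mul (by positivity), ENNReal.ofReal_inv_of_pos hcard,
    ENNReal.ofReal_natCast, tsum_fintype, tsum_fintype,
    ENNReal.ofReal_sum_of_nonneg (f := fun y : r ⁻¹' {x} => s.indicator (1 : X → ℝ) y)
      fun y _ => hnonneg y]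
  simp only [hterm]

lemma exists_measurable_fin_bool_eventually_injOn (X : Type*) [MeasurableSpace X]
    [MeasurableSpace.CountablySeparated X] :
    ∃ cell : (m : ℕ) → X → Fin m → Bool, (∀ m, Measurable (cell m)) ∧
      ∀ s : Set X, s.Finite → ∀ᶠ m in atTop, Set.InjOn (cell m) s := by
  obtain ⟨g, hg, hg_inj⟩ := MeasurableSpace.measurable_injection_nat_bool_of_countablySeparated X
  refine ⟨fun m y i => g y i, fun m =>
    measurable_pi_lambda _ fun i => (measurable_pi_apply (i : ℕ)).comp hg, fun s hs => ?_⟩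
  have hsep (y y' : X) :
      ∀ᶠ m : ℕ in atTop, (fun i : Fin m => g y i) = (fun i : Fin m => g y' i) → y = y' := by
    rcases eq_or_ne y y' with rfl | hyy
    · simp
    · obtain ⟨k, hk⟩ := Function.ne_iff.1 (hg_inj.ne hyy)
      filter_upwards [eventually_gt_atTop k] with m hm h
      exact absurd (congrFun h ⟨k, hm⟩) hk
  filter_upwards [(eventually_all_finite hs).2 fun y _ =>
    (eventually_all_finite hs).2 fun y' _ => hsep y y'] with m hm y hy y' hy'
  exact hm y hy y' hy'

namespace IsStronglyInvariant

variable [MeasurableSpace X] {ρ : Measure X} [IsFiniteMeasure ρ]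

/- A function with nonzero Bochner integral is integrable; adding a large constant to `f` makes the
integral of its average nonzero. -/
lemma integrable_average (hρ : IsStronglyInvariant r ρ) (hfin : ∀ x, (r ⁻¹' {x}).Finite)
    (hne : ∀ x, (r ⁻¹' {x}).Nonempty) {f : X → ℝ} (hf : Measurable f) {M : ℝ}
    (hM : ∀ x, |f x| ≤ M) :
    Integrable (fun x => (Nat.card (r ⁻¹' {x}) : ℝ)⁻¹ * ∑' y : r ⁻¹' {x}, f y.1) ρ := by
  rcases eq_or_ne ρ 0 with rfl | hρ0
  · exact integrable_zero_measure
  have hshift (x : X) : (Nat.card (r ⁻¹' {x}) : ℝ)⁻¹ * ∑' y : r ⁻¹' {x}, (f y.1 + (M + 1)) =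
      (Nat.card (r ⁻¹' {x}) : ℝ)⁻¹ * ∑' y : r ⁻¹' {x}, f y.1 + (M + 1) := by
    have := (hfin x).fintype
    have hcard : (Nat.card (r ⁻¹' {x}) : ℝ) ≠ 0 :=
      mod_cast Nat.one_le_iff_ne_zero.1 (one_le_card_fiber (hfin x) (hne x))
    rw [tsum_fintype, tsum_fintype, Finset.sum_add_distrib, mul_add, Finset.sum_const,
      Finset.card_univ, ← Nat.card_eq_fintype_card, nsmul_eq_mul, inv_mul_cancel_left₀ hcard]
  have hbound : ∃ N : ℝ, ∀ x, |f x + (M + 1)| ≤ N :=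
    ⟨M + |M + 1|, fun x => (abs_add_le _ _).trans (by grw [hM x])⟩
  have hint : Integrable (fun x => f x + (M + 1)) ρ :=
    (Integrable.of_bound hf.aestronglyMeasurable M (.of_forall hM)).add (integrable_const _)
  have hpos : 0 < ∫ x, f x + (M + 1) ∂ρ := by
    refine (integral_pos_iff_support_of_nonneg (fun x => ?_) hint).2 ?_
    · simp only [Pi.zero_apply]
      linarith [neg_le_of_abs_le (hM x)]
    · have hsupp : Function.support (fun x => f x + (M + 1)) = Set.univ :=
        Set.eq_univ_of_forall fun x => by
          have := neg_le_of_abs_le (hM x)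
          simp only [Function.mem_support]
          linarith
      rwa [hsupp, Measure.measure_univ_pos]
  rw [hρ _ (hf.add_const _) hbound] at hpos
  simp only [hshift] at hpos
  exact (integrable_add_iff_integrable_left' (integrable_const _)).1
    (.of_integral_ne_zero hpos.ne')

lemma integrable_average_indicator (hρ : IsStronglyInvariant r ρ)
    (hfin : ∀ x, (r ⁻¹' {x}).Finite) (hne : ∀ x, (r ⁻¹' {x}).Nonempty) {s : Set X}
    (hs : MeasurableSet s) :
    Integrable (fun x => (Nat.card (r ⁻¹' {x}) : ℝ)⁻¹ *
      ∑' y : r ⁻¹' {x}, s.indicator (1 : X → ℝ) y.1) ρ :=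
  hρ.integrable_average hfin hne (measurable_one.indicator hs) (M := 1) fun x => by
    by_cases hx : x ∈ s <;> simp [hx]

lemma aemeasurable_fiberAverage_indicator (hρ : IsStronglyInvariant r ρ)
    (hfin : ∀ x, (r ⁻¹' {x}).Finite) (hne : ∀ x, (r ⁻¹' {x}).Nonempty) {s : Set X}
    (hs : MeasurableSet s) : AEMeasurable (fiberAverage r (s.indicator 1)) ρ := by
  simpa only [← fiberAverage_indicator_one hfin hne] using
    (hρ.integrable_average_indicator hfin hne hs).aemeasurable.ennreal_ofReal

lemma lintegral_fiberAverage_indicator (hρ : IsStronglyInvariant r ρ)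
    (hfin : ∀ x, (r ⁻¹' {x}).Finite) (hne : ∀ x, (r ⁻¹' {x}).Nonempty) {s : Set X}
    (hs : MeasurableSet s) : ∫⁻ x, fiberAverage r (s.indicator 1) x ∂ρ = ρ s := by
  have hnonneg (x : X) : 0 ≤ (Nat.card (r ⁻¹' {x}) : ℝ)⁻¹ *
      ∑' y : r ⁻¹' {x}, s.indicator (1 : X → ℝ) y.1 :=
    mul_nonneg (by positivity) (tsum_nonneg fun y =>
      Set.indicator_nonneg (fun _ _ => zero_le_one) _)
  simp only [fiberAverage_indicator_one hfin hne]
  rw [← ofReal_integral_eq_lintegral_ofReal (hρ.integrable_average_indicator hfin hne hs)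
    (.of_forall hnonneg), ← hρ _ (measurable_one.indicator hs)
    ⟨1, fun x => by by_cases hx : x ∈ s <;> simp [hx]⟩, integral_indicator_one hs,
    ofReal_measureReal]

lemma ae_forall_fiber (hρ : IsStronglyInvariant r ρ) (hfin : ∀ x, (r ⁻¹' {x}).Finite)
    (hne : ∀ x, (r ⁻¹' {x}).Nonempty) {p : X → Prop} (hp : ∀ᵐ x ∂ρ, p x) :
    ∀ᵐ x ∂ρ, ∀ y, r y = x → p y := by
  obtain ⟨s, hps, hs, hs0⟩ := exists_measurable_superset_of_null (ae_iff.1 hp)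
  have hzero : ∫⁻ x, fiberAverage r (s.indicator 1) x ∂ρ = 0 :=
    (hρ.lintegral_fiberAverage_indicator hfin hne hs).trans hs0
  rw [lintegral_eq_zero_iff' (hρ.aemeasurable_fiberAverage_indicator hfin hne hs)] at hzero
  filter_upwards [hzero] with x hx y hy
  have hys : y ∉ s := by simpa using fiberAverage_eq_zero_iff.1 hx y hy
  by_contra hpy
  exact hys (hps hpy)

lemma quasiMeasurePreserving (hρ : IsStronglyInvariant r ρ) (hr : Measurable r)
    (hfin : ∀ x, (r ⁻¹' {x}).Finite) (hne : ∀ x, (r ⁻¹' {x}).Nonempty) :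
    Measure.QuasiMeasurePreserving r ρ ρ := by
  refine ⟨hr, .mk fun s hs hs0 => ?_⟩
  rw [Measure.map_apply hr hs, ← hρ.lintegral_fiberAverage_indicator hfin hne (hr hs)]
  refine (lintegral_congr_ae ?_).trans lintegral_zero
  filter_upwards [measure_eq_zero_iff_ae_notMem.1 hs0] with x hx
  refine fiberAverage_eq_zero_iff.2 fun y hy => Set.indicator_of_notMem (fun hys => hx ?_) _
  exact hy ▸ hys

lemma ae_forall_iterate_fiber (hρ : IsStronglyInvariant r ρ) (hfin : ∀ x, (r ⁻¹' {x}).Finite)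
    (hne : ∀ x, (r ⁻¹' {x}).Nonempty) {p : X → Prop} (hp : ∀ᵐ x ∂ρ, p x) :
    ∀ᵐ x ∂ρ, ∀ (n : ℕ) (y : X), r^[n] y = x → p y := by
  refine ae_all_iff.2 fun n => ?_
  induction n with
  | zero => simpa using hp
  | succ n ih =>
    filter_upwards [hρ.ae_forall_fiber hfin hne ih] with x hx y hy
    exact hx (r^[n] y) ((Function.iterate_succ_apply' r n y).symm.trans hy) y rfl

lemma aemeasurable_fiberAverage (hρ : IsStronglyInvariant r ρ) (hfin : ∀ x, (r ⁻¹' {x}).Finite)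
    (hne : ∀ x, (r ⁻¹' {x}).Nonempty) {f : X → ℝ≥0∞} (hf : AEMeasurable f ρ) :
    AEMeasurable (fiberAverage r f) ρ := by
  have hmeas : ∀ ⦃g : X → ℝ≥0∞⦄, Measurable g → AEMeasurable (fiberAverage r g) ρ := by
    intro g hg
    refine Measurable.ennreal_induction (motive := fun g => AEMeasurable (fiberAverage r g) ρ)
      (fun c s hs => ?_) (fun f g _ _ _ hf hg => ?_) (fun f _ hmono hf => ?_) hg
    · have hc : (s.indicator fun _ => c) = fun y => c * s.indicator (1 : X → ℝ≥0∞) y := by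
        ext y
        by_cases hy : y ∈ s <;> simp [hy]
      rw [hc, fiberAverage_const_mul]
      exact (hρ.aemeasurable_fiberAverage_indicator hfin hne hs).const_mul c
    · rw [fiberAverage_add]
      exact hf.add hg
    · rw [fiberAverage_iSup hfin hmono]
      exact .iSup hf
  refine (hmeas hf.measurable_mk).congr ?_
  filter_upwards [hρ.ae_forall_fiber hfin hne hf.ae_eq_mk] with x hx
  simp only [fiberAverage]
  rw [tsum_congr fun y : r ⁻¹' {x} => (hx y.1 y.2).symm]

/- A sequence of finer and finer finite Borel partitions separates the points of each fibre; the
number of cells met by the fibre increases to its cardinality. -/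
lemma aemeasurable_card_fiber [MeasurableSpace.CountablySeparated X]
    (hρ : IsStronglyInvariant r ρ) (hfin : ∀ x, (r ⁻¹' {x}).Finite)
    (hne : ∀ x, (r ⁻¹' {x}).Nonempty) : AEMeasurable (fun x => Nat.card (r ⁻¹' {x})) ρ := by
  classical
  obtain ⟨cell, hcell, hinj⟩ := exists_measurable_fin_bool_eventually_injOn X
  let count (m : ℕ) (x : X) : ℕ := ∑ σ : Fin m → Bool,
    if fiberAverage r ((cell m ⁻¹' {σ}).indicator 1) x = 0 then 0 else 1
  have hcount (m : ℕ) (x : X) : count m x = (cell m '' (r ⁻¹' {x})).ncard := by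
    have hmem (σ : Fin m → Bool) : fiberAverage r ((cell m ⁻¹' {σ}).indicator 1) x = 0 ↔
        σ ∉ cell m '' (r ⁻¹' {x}) := by
      simp only [fiberAverage_eq_zero_iff, Set.indicator_apply_eq_zero, Pi.one_apply, one_ne_zero,
        imp_false, Set.mem_image, Set.mem_preimage, Set.mem_singleton_iff, not_exists, not_and]
    simp only [count, hmem, ite_not, Set.ncard_eq_toFinset_card', ← Set.mem_toFinset,
      Finset.sum_ite_mem, Finset.univ_inter, Finset.card_eq_sum_ones]
  refine aemeasurable_of_tendsto_metrizable_ae' (f := count) (fun m => ?_) (.of_forall fun x => ?_)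
  · refine Finset.aemeasurable_fun_sum _ fun σ _ => ?_
    have hzero : Measurable fun t : ℝ≥0∞ => if t = 0 then 0 else 1 :=
      measurable_const.ite (measurableSet_singleton 0) measurable_const
    exact hzero.comp_aemeasurable (hρ.aemeasurable_fiberAverage_indicator hfin hne
      (hcell m (measurableSet_singleton σ)))
  · refine tendsto_const_nhds.congr' ?_
    filter_upwards [hinj _ (hfin x)] with m hm
    rw [hcount, hm.ncard_image, Nat.card_coe_set_eq]

end IsStronglyInvariant

end FiberAverage

section TransferOperator

variable {X : Type*} {r : X → X}

/-- The Ruelle transfer operator of `r` with weight `W`. -/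
def transferOp (r : X → X) (W f : X → ℝ≥0∞) (x : X) : ℝ≥0∞ :=
  ∑' y : r ⁻¹' {x}, W y * f y

lemma transferOp_iterate (r : X → X) (W : X → ℝ≥0∞) (n : ℕ) (f : X → ℝ≥0∞) (x : X) :
    (transferOp r W)^[n] f x =
      ∑' y : r^[n] ⁻¹' {x}, (∏ j ∈ Finset.range n, W (r^[j] y)) * f y := by
  induction n generalizing f with
  | zero => simp
  | succ n ih =>
    have hdisj : (r^[n] ⁻¹' {x}).PairwiseDisjoint fun w => r ⁻¹' {w} :=
      fun w _ w' _ hww => Disjoint.preimage r (Set.disjoint_singleton.2 hww)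
    rw [Function.iterate_succ_apply, ih, Function.iterate_succ, Set.preimage_comp,
      ← Set.biUnion_preimage_singleton r (r^[n] ⁻¹' {x}), ENNReal.tsum_biUnion'
        (f := fun y => (∏ j ∈ Finset.range (n + 1), W (r^[j] y)) * f y) hdisj]
    refine tsum_congr fun w => ?_
    rw [transferOp, ← ENNReal.tsum_mul_left]
    refine tsum_congr fun y => ?_
    have hy : r y.1 = w := y.2
    simp only [Finset.prod_range_succ', Function.iterate_succ_apply, Function.iterate_zero_apply,
      hy, mul_assoc]

lemma transferOp_eq_fiberAverage (r : X → X) (g f : X → ℝ≥0∞) :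
    transferOp r (fun y => g y / Nat.card (r ⁻¹' {r y})) f = fiberAverage r (g * f) := by
  ext x
  rw [transferOp, fiberAverage, ← ENNReal.tsum_mul_left]
  refine tsum_congr fun y => ?_
  have hy : r y.1 = x := y.2
  rw [hy, Pi.mul_apply, ENNReal.div_eq_inv_mul, mul_assoc]

lemma IsStronglyInvariant.aemeasurable_transferOp_iterate [MeasurableSpace X] {ρ : Measure X}
    [IsFiniteMeasure ρ] (hρ : IsStronglyInvariant r ρ) (hfin : ∀ x, (r ⁻¹' {x}).Finite)
    (hne : ∀ x, (r ⁻¹' {x}).Nonempty) {g f : X → ℝ≥0∞} (hg : Measurable g)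
    (hf : Measurable f) (n : ℕ) :
    AEMeasurable ((transferOp r fun y => g y / Nat.card (r ⁻¹' {r y}))^[n] f) ρ := by
  induction n with
  | zero => exact hf.aemeasurable
  | succ n ih =>
    rw [Function.iterate_succ_apply', transferOp_eq_fiberAverage]
    exact hρ.aemeasurable_fiberAverage hfin hne (hg.aemeasurable.mul ih)

lemma finite_preimage_iterate_singleton (hfin : ∀ x, (r ⁻¹' {x}).Finite) (n : ℕ) (x : X) :
    (r^[n] ⁻¹' {x}).Finite := by
  induction n with
  | zero => simp
  | succ n ih =>
    rw [Function.iterate_succ, Set.preimage_comp]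
    exact ih.preimage' fun y _ => hfin y

end TransferOperator

namespace Solenoid

variable {X : Type*} {r : X → X}

lemma iterate_coord (z : Solenoid r) (k : ℕ) {m n : ℤ} (h : m = n + k) :
    r^[k] (z.1 m) = z.1 n := by
  subst h
  induction k with
  | zero => simp
  | succ k ih =>
    rw [Function.iterate_succ_apply, Nat.cast_succ, ← add_assoc, z.2, ih]

lemma ext_of_eventually {z w : Solenoid r} {n₀ : ℕ} (h : ∀ n : ℕ, n₀ ≤ n → z.1 n = w.1 n) :
    z = w := by
  refine Subtype.ext (funext fun n => ?_)
  obtain ⟨k, hk⟩ := Int.le.dest (le_max_right (n₀ : ℤ) n)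
  obtain ⟨m, hm⟩ := Int.eq_ofNat_of_zero_le ((Int.natCast_nonneg n₀).trans (le_max_left (n₀ : ℤ) n))
  rw [hm] at hk
  have hnm : n₀ ≤ m := by exact_mod_cast hm ▸ le_max_left (n₀ : ℤ) n
  rw [← z.iterate_coord k hk.symm, ← w.iterate_coord k hk.symm, h m hnm]

lemma ext_nat {z w : Solenoid r} (h : ∀ n : ℕ, z.1 n = w.1 n) : z = w :=
  ext_of_eventually (n₀ := 0) fun n _ => h n

/- Beyond some time, a path that stays where `r` is injective is determined by its position at that
time, and there are only finitely many positions over each starting point. -/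
lemma countable_of_injOn (hfin : ∀ x, (r ⁻¹' {x}).Finite) {I : Set X}
    (hI : Set.InjOn r I) (x : X) {N : Set (Solenoid r)}
    (hN : ∀ z ∈ N, z.1 0 = x ∧ ∀ᶠ n : ℕ in atTop, z.1 n ∈ I) : N.Countable := by
  have hsub : N ⊆ ⋃ n : ℕ, {z : Solenoid r | z.1 0 = x ∧ ∀ k : ℕ, n ≤ k → z.1 k ∈ I} := by
    intro z hz
    obtain ⟨n, hn⟩ := eventually_atTop.1 (hN z hz).2
    exact Set.mem_iUnion.2 ⟨n, (hN z hz).1, hn⟩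
  refine Set.Countable.mono hsub (Set.countable_iUnion fun n => Set.Finite.countable ?_)
  refine Set.Finite.of_finite_image (f := fun z : Solenoid r => z.1 n)
    ((finite_preimage_iterate_singleton hfin n x).subset ?_) ?_
  · rintro _ ⟨z, ⟨hz, _⟩, rfl⟩
    exact (z.iterate_coord n (by simp)).trans hz
  · rintro z ⟨_, hz⟩ w ⟨_, hw⟩ hzw
    refine ext_of_eventually (n₀ := n) fun k hk => ?_
    induction k, hk using Nat.le_induction with
    | base => exact hzw
    | succ k hk ih =>
      refine hI (hz _ (by lia)) (hw _ (by lia)) ?_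
      rw [Nat.cast_succ, z.2, w.2, ih]

variable [MeasurableSpace X]

lemma measurable_coord (n : ℤ) : Measurable fun z : Solenoid r => z.1 n :=
  (measurable_pi_apply n).comp measurable_subtype_coe

lemma monotone_comap_coord (hr : Measurable r) :
    Monotone fun n : ℕ => MeasurableSpace.comap (fun z : Solenoid r => z.1 n) inferInstance := by
  refine monotone_nat_of_le_succ fun n => ?_
  rintro _ ⟨B, hB, rfl⟩
  refine ⟨r ⁻¹' B, hr hB, ?_⟩
  ext z
  simp [z.2]

lemma iSup_comap_coord (hr : Measurable r) :
    ⨆ n : ℕ, MeasurableSpace.comap (fun z : Solenoid r => z.1 n) inferInstance =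
      (inferInstance : MeasurableSpace (Solenoid r)) := by
  refine le_antisymm (iSup_le fun n => (measurable_coord n).comap_le) ?_
  refine Measurable.comap_le (@measurable_pi_lambda _ _ _ (_) _ _ fun n => ?_)
  have hnat (k : ℕ) : Measurable[⨆ n : ℕ, MeasurableSpace.comap
      (fun z : Solenoid r => z.1 n) inferInstance] fun z : Solenoid r => z.1 k :=
    Measurable.of_comap_le (le_iSup (fun n : ℕ => MeasurableSpace.comap
      (fun z : Solenoid r => z.1 n) inferInstance) k)
  obtain ⟨k, rfl | rfl⟩ := n.eq_nat_or_neg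
  · exact hnat k
  · have hneg : (fun z : Solenoid r => z.1 (-k)) = r^[k] ∘ fun z : Solenoid r => z.1 (0 : ℕ) := by
      ext z
      exact (z.iterate_coord k (by simp)).symm
    rw [hneg]
    exact (hr.iterate k).comp (hnat 0)

end Solenoid

lemma aemeasurable_measure_of_isPiSystem {X Y : Type*} [MeasurableSpace X] [mY : MeasurableSpace Y]
    {ρ : Measure X} {κ : X → Measure Y} (hκ : ∀ x, IsProbabilityMeasure (κ x)) {S : Set (Set Y)}
    (hgen : mY = MeasurableSpace.generateFrom S) (hS : IsPiSystem S)
    (h : ∀ s ∈ S, AEMeasurable (fun x => κ x s) ρ) {s : Set Y} (hs : MeasurableSet s) :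
    AEMeasurable (fun x => κ x s) ρ := by
  induction s, hs using MeasurableSpace.induction_on_inter hgen hS with
  | empty => simp
  | basic s hs => exact h s hs
  | compl s hs ih =>
    simp only [prob_compl_eq_one_sub hs]
    exact ih.const_sub 1
  | iUnion f hf hfm ih =>
    simp only [measure_iUnion hf hfm]
    exact .tsum ih

namespace IsPathMeasureFamily

variable {X : Type*} [MeasurableSpace X] {r : X → X}
  {W : X → ℝ≥0∞} {P : X → Measure (Solenoid r)}

lemma measure_cylSet (hP : IsPathMeasureFamily r W P) {x : X} {ω : Solenoid r} (hω : ω.1 0 = x)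
    (n : ℕ) : P x (cylSet r x n fun j => ω.1 ((j : ℕ) + 1)) =
      ∏ k ∈ Finset.range n, W (ω.1 ((k : ℤ) + 1)) := by
  rw [hP.2.2, Finset.prod_range]
  refine ⟨fun _ => ?_, fun j _ => ?_⟩
  · simpa [hω] using ω.2 0
  · simpa using ω.2 (j + 1)

variable [MeasurableSingletonClass X]

lemma ae_start (hP : IsPathMeasureFamily r W P) (x : X) : ∀ᵐ z ∂P x, z.1 0 = x := by
  have := hP.1 x
  exact (prob_compl_eq_zero_iff (Solenoid.measurable_coord 0 (measurableSet_singleton x))).2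
    (hP.2.1 x)

lemma tendsto_prod (hP : IsPathMeasureFamily r W P) {x : X} {ω : Solenoid r} (hω : ω.1 0 = x) :
    Tendsto (fun n : ℕ => ∏ k ∈ Finset.range n, W (ω.1 ((k : ℤ) + 1))) atTop
      (𝓝 (P x {ω})) := by
  have := hP.1 x
  let cyl (n : ℕ) : Set (Solenoid r) := cylSet r x n fun j => ω.1 ((j : ℕ) + 1)
  have hcyl (n : ℕ) : MeasurableSet (cyl n) := by
    have heq : cyl n = {z : Solenoid r | z.1 0 = x} ∩
        ⋂ j : Fin n, {z : Solenoid r | z.1 ((j : ℕ) + 1) = ω.1 ((j : ℕ) + 1)} := by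
      ext z
      simp [cyl, cylSet]
    rw [heq]
    exact (Solenoid.measurable_coord 0 (measurableSet_singleton x)).inter
      (.iInter fun j => Solenoid.measurable_coord _ (measurableSet_singleton _))
  have hinter : {ω} = ⋂ n, cyl n := by
    refine Set.Subset.antisymm (Set.subset_iInter fun n => ?_) fun z hz => ?_
    · rintro _ rfl
      exact ⟨hω, fun _ => rfl⟩
    · refine Solenoid.ext_nat fun n => ?_
      rcases n with _ | n
      · exact (Set.mem_iInter.1 hz 0).1.trans hω.symm
      · simpa using (Set.mem_iInter.1 hz (n + 1)).2 ⟨n, n.lt_succ_self⟩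
  have hanti : Antitone cyl := fun n m hnm z hz => ⟨hz.1, fun j => hz.2 (j.castLE hnm)⟩
  simp only [← hP.measure_cylSet hω, hinter]
  exact tendsto_measure_iInter_atTop (fun n => (hcyl n).nullMeasurableSet) hanti
    ⟨0, measure_ne_top _ _⟩

lemma measure_coord_eq (hP : IsPathMeasureFamily r W P) {n : ℕ} {x y : X} (hy : r^[n] y = x) :
    P x {z | z.1 n = y} = ∏ j ∈ Finset.range n, W (r^[j] y) := by
  let word (j : Fin n) : X := r^[n - 1 - j] y
  have hword : cylOK r x n word := by
    refine ⟨fun hn => ?_, fun j hj => ?_⟩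
    · rw [← hy, ← Function.iterate_succ_apply' r]
      congr 2
      lia
    · simp only [word, ← Function.iterate_succ_apply' r]
      congr 2
      lia
  have hset : cylSet r x n word =ᵐ[P x] {z | z.1 n = y} := by
    filter_upwards [hP.ae_start x] with z hz
    refine propext ⟨fun h => ?_, fun h => ⟨hz, fun j => ?_⟩⟩
    · change z.1 n = y
      rcases n with _ | n
      · exact hz.trans hy.symm
      · simpa [word] using h.2 (Fin.last n)
    · have hzn : z.1 n = y := h
      simp only [word, ← hzn]
      exact (z.iterate_coord _ (by have := j.2; omega)).symm
  rw [← measure_congr hset, hP.2.2 x n word hword, ← Finset.prod_range_reflect, Finset.prod_range]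

lemma measure_coord_mem (hP : IsPathMeasureFamily r W P) (hfin : ∀ x, (r ⁻¹' {x}).Finite) (n : ℕ)
    (B : Set X) (x : X) : P x {z | z.1 n ∈ B} = (transferOp r W)^[n] (B.indicator 1) x := by
  have hF : (r^[n] ⁻¹' {x}).Countable := (finite_preimage_iterate_singleton hfin n x).countable
  have hset : {z : Solenoid r | z.1 n ∈ B} =ᵐ[P x]
      (fun z : Solenoid r => z.1 n) ⁻¹' (r^[n] ⁻¹' {x} ∩ B) := by
    filter_upwards [hP.ae_start x] with z hz
    exact propext (and_iff_right ((z.iterate_coord n (by simp)).trans hz)).symm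
  rw [measure_congr hset, ← tsum_measure_preimage_singleton (hF.mono Set.inter_subset_left)
    fun y _ => Solenoid.measurable_coord n (measurableSet_singleton y), transferOp_iterate,
    tsum_subtype (r^[n] ⁻¹' {x} ∩ B) fun y => P x ((fun z : Solenoid r => z.1 n) ⁻¹' {y}),
    ← Set.indicator_indicator, ← tsum_subtype]
  refine tsum_congr fun y => ?_
  rw [← hP.measure_coord_eq y.2]
  by_cases hy : y.1 ∈ B
  · simp only [Set.indicator_of_mem hy, Pi.one_apply, mul_one]
    rfl
  · simp only [Set.indicator_of_notMem hy, mul_zero]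

lemma aemeasurable_measure (hr : Measurable r) (hfin : ∀ x, (r ⁻¹' {x}).Finite)
    (hne : ∀ x, (r ⁻¹' {x}).Nonempty) {ρ : Measure X} [IsFiniteMeasure ρ]
    (hρ : IsStronglyInvariant r ρ) {g : X → ℝ≥0∞} (hg : Measurable g)
    (hP : IsPathMeasureFamily r (fun y => g y / Nat.card (r ⁻¹' {r y})) P) {s : Set (Solenoid r)}
    (hs : MeasurableSet s) : AEMeasurable (fun x => P x s) ρ := by
  refine aemeasurable_measure_of_isPiSystem hP.1
    ((Solenoid.iSup_comap_coord hr).symm.trans (MeasurableSpace.measurableSpace_iSup_eq _))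
    ?_ ?_ hs
  · rw [Set.ofPred_exists]
    exact isPiSystem_iUnion_of_monotone _ (fun n => @MeasurableSpace.isPiSystem_measurableSet _ (_))
      (Solenoid.monotone_comap_coord hr)
  · rintro _ ⟨n, B, hB, rfl⟩
    simp only [Set.preimage, hP.measure_coord_mem hfin]
    exact hρ.aemeasurable_transferOp_iterate hfin hne hg (measurable_one.indicator hB) n

end IsPathMeasureFamily

section Cycle

/-- Metric repulsion from `x`: near `x`, the map `g` multiplies the distance to `x` by a factor
bounded below by some `c⁻¹ > 1`. That `x` is fixed by `g` is not part of the definition. -/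
def IsRepellingAt {X : Type*} [MetricSpace X] (g : X → X) (x : X) : Prop :=
  ∃ c δ : ℝ, 0 < c ∧ c < 1 ∧ 0 < δ ∧ ∀ y : X,
    0 < dist y x → dist y x < δ → c⁻¹ * dist y x < dist (g y) x

/-- `xc` enumerates, backwards along `r`, a repelling cycle at whose points `r` is continuous. The
period `p` need not be minimal. -/
structure IsRepellingCycle {X : Type*} [MetricSpace X] (r : X → X) {p : ℕ} (xc : ZMod p → X) :
    Prop where
  map_succ : ∀ i, r (xc (i + 1)) = xc i
  continuousAt : ∀ i, ContinuousAt r (xc i)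
  repelling : ∀ i, IsRepellingAt r^[p] (xc i)

/-- A modulus of continuity summable along geometric sequences, as used in the definition of
`β`-Lipschitz functions. -/
structure IsSummableModulus (β : ℝ → ℝ) : Prop where
  monotoneOn : MonotoneOn β (Set.Ici 0)
  nonneg : ∀ t : ℝ, 0 ≤ t → 0 ≤ β t
  summable : ∀ A : ℝ, 0 < A → ∀ c : ℝ, 0 < c → c < 1 → Summable fun k : ℕ => β (A * c ^ (k + 1))

lemma summable_of_forall_residue {R : Type*} [AddCommGroup R] [TopologicalSpace R]
    [IsTopologicalAddGroup R] {p : ℕ} [NeZero p] {f : ℕ → R}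
    (h : ∀ j : ℕ, Summable fun n => f (p * n + j)) : Summable f := by
  have hf : f = fun n => ∑ k : ZMod p, {n : ℕ | (n : ZMod p) = k}.indicator f n := by
    ext n
    simp [Set.indicator_apply]
  rw [hf]
  refine summable_sum fun k _ => ?_
  rw [← ZMod.natCast_zmod_val k]
  exact (summable_indicator_mod_iff_summable p k.val f).2 (h k.val)

lemma eventually_of_forall_residue {p : ℕ} (hp : 0 < p) {q : ℕ → Prop}
    (h : ∀ j, ∀ᶠ n in atTop, q (p * n + j)) : ∀ᶠ n in atTop, q n := by
  have hall : ∀ᶠ n in atTop, ∀ j ∈ Finset.range p, q (p * n + j) :=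
    (eventually_all_finset _).2 fun j _ => h j
  filter_upwards [(Nat.tendsto_div_const_atTop hp.ne').eventually hall] with n hn
  simpa [Nat.div_add_mod] using hn (n % p) (Finset.mem_range.2 (n.mod_lt hp))

lemma IsSummableModulus.summable_comp {β : ℝ → ℝ} (hβ : IsSummableModulus β) {d : ℕ → ℝ}
    (hd : ∀ n, 0 ≤ d n) {c : ℝ} (hc₀ : 0 < c) (hc₁ : c < 1)
    (hstep : ∀ᶠ n in atTop, d (n + 1) ≤ c * d n) : Summable fun n => β (d n) := by
  obtain ⟨n₀, hn₀⟩ := eventually_atTop.1 hstep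
  have hgeo (k : ℕ) : d (k + n₀) ≤ d n₀ * c ^ k := by
    induction k with
    | zero => simp
    | succ k ih =>
      calc d (k + 1 + n₀) = d (k + n₀ + 1) := by rw [add_right_comm]
        _ ≤ c * d (k + n₀) := hn₀ _ (Nat.le_add_left n₀ k)
        _ ≤ c * (d n₀ * c ^ k) := by gcongr
        _ = d n₀ * c ^ (k + 1) := by ring
  have hA : 0 < (d n₀ + 1) / c := div_pos (add_pos_of_nonneg_of_pos (hd n₀) one_pos) hc₀
  refine (summable_nat_add_iff n₀).1 (Summable.of_nonneg_of_le (fun k => hβ.nonneg _ (hd _))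
    (fun k => ?_) (hβ.summable _ hA c hc₀ hc₁))
  refine hβ.monotoneOn (hd _) (Set.mem_Ici.2 (by positivity)) ((hgeo k).trans ?_)
  rw [pow_succ', ← mul_assoc, div_mul_cancel₀ _ hc₀.ne']
  gcongr
  exact le_add_of_nonneg_right zero_le_one

lemma IsSummableModulus.continuousAt_of_norm_sub_le {X E : Type*} [MetricSpace X]
    [NormedAddCommGroup E] {β : ℝ → ℝ} (hβ : IsSummableModulus β) {f : X → E} {x : X}
    (hf : ∀ᶠ y in 𝓝 x, ‖f y - f x‖ ≤ β (dist y x)) : ContinuousAt f x := by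
  refine Metric.tendsto_nhds.2 fun ε hε => ?_
  have hzero := (hβ.summable 1 one_pos (1 / 2) (by norm_num) (by norm_num)).tendsto_atTop_zero
  obtain ⟨k, hk⟩ := (hzero.eventually (gt_mem_nhds hε)).exists
  have hpos : (0 : ℝ) < 1 * (1 / 2) ^ (k + 1) := by positivity
  filter_upwards [hf, Metric.ball_mem_nhds x hpos] with y hy hyx
  rw [dist_eq_norm]
  exact (hy.trans (hβ.monotoneOn dist_nonneg hpos.le (Metric.mem_ball.1 hyx).le)).trans_lt hk

namespace IsRepellingCycle

variable {X : Type*} [MetricSpace X] {r : X → X} {p : ℕ} {xc : ZMod p → X}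

lemma tendsto_iterate (hC : IsRepellingCycle r xc) (k : ℕ) (i : ZMod p) :
    Tendsto r^[k] (𝓝 (xc (i + k))) (𝓝 (xc i)) := by
  induction k with
  | zero => simpa using tendsto_id
  | succ k ih =>
    have hstep : Tendsto r (𝓝 (xc (i + k + 1))) (𝓝 (xc (i + k))) :=
      hC.map_succ (i + k) ▸ hC.continuousAt (i + k + 1)
    rw [Nat.cast_succ, ← add_assoc, Function.iterate_succ]
    exact ih.comp hstep

lemma tendsto_coord_residue (hC : IsRepellingCycle r xc) (hp : 0 < p) {z : Solenoid r} {i : ZMod p}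
    (hz : Tendsto (fun n : ℕ => z.1 ((p : ℤ) * n)) atTop (𝓝 (xc i))) (j : ℕ) :
    Tendsto (fun n : ℕ => z.1 (p * n + j : ℕ)) atTop (𝓝 (xc (i + j))) := by
  have hj : j ≤ p * j := Nat.le_mul_of_pos_left j hp
  have hiter := hC.tendsto_iterate (p * j - j) (i + j)
  have hcast : i + j + ((p * j - j : ℕ) : ZMod p) = i := by
    rw [Nat.cast_sub hj, Nat.cast_mul, ZMod.natCast_self]
    ring
  rw [hcast] at hiter
  refine (hiter.comp (hz.comp (tendsto_add_atTop_nat j))).congr fun n => ?_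
  exact z.iterate_coord _ (by push_cast [Nat.cast_sub hj]; ring)

lemma eventually_coord (hC : IsRepellingCycle r xc) (hp : 0 < p) {z : Solenoid r} {i : ZMod p}
    (hz : Tendsto (fun n : ℕ => z.1 ((p : ℤ) * n)) atTop (𝓝 (xc i))) {q : ZMod p → X → Prop}
    (hq : ∀ j, ∀ᶠ y in 𝓝 (xc j), q j y) : ∀ᶠ n : ℕ in atTop, q (i + n) (z.1 n) := by
  refine eventually_of_forall_residue hp fun j => ?_
  filter_upwards [(hC.tendsto_coord_residue hp hz j).eventually (hq (i + j))] with n hn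
  simpa using hn

/- Going backwards through `r^[p]` contracts, so along each residue class modulo `p` the distance to
the cycle decays geometrically. -/
lemma summable_modulus_dist (hC : IsRepellingCycle r xc) (hp : 0 < p) {β : ℝ → ℝ}
    (hβ : IsSummableModulus β) {z : Solenoid r} {i : ZMod p}
    (hz : Tendsto (fun n : ℕ => z.1 ((p : ℤ) * n)) atTop (𝓝 (xc i))) :
    Summable fun n : ℕ => β (dist (z.1 n) (xc (i + n))) := by
  have : NeZero p := ⟨hp.ne'⟩
  refine summable_of_forall_residue (p := p) fun j => ?_
  obtain ⟨c, δ, hc₀, hc₁, hδ, hexp⟩ := hC.repelling (i + j)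
  have hcast (n : ℕ) : i + (p * n + j : ℕ) = i + j := by simp
  simp only [hcast]
  refine hβ.summable_comp (fun _ => dist_nonneg) hc₀ hc₁ ?_
  have hnear := ((hC.tendsto_coord_residue hp hz j).comp (tendsto_add_atTop_nat 1)).eventually
    (Metric.ball_mem_nhds _ hδ)
  filter_upwards [hnear] with n hn
  rcases (dist_nonneg (x := z.1 (p * (n + 1) + j : ℕ)) (y := xc (i + j))).eq_or_lt with h0 | h0
  · rw [← h0]
    positivity
  · have hlt := hexp _ h0 hn
    rw [z.iterate_coord (n := (p * n + j : ℕ)) p (by push_cast; ring),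
      inv_mul_lt_iff₀ hc₀] at hlt
    exact hlt.le

end IsRepellingCycle

end Cycle

section ScalingProduct

variable {X : Type*}

/-- The quadrature mirror filter condition. -/
def IsQuadratureFilter (r : X → X) (m0 : X → ℂ) : Prop :=
  ∀ x, (Nat.card (r ⁻¹' {x}) : ℝ)⁻¹ * ∑' y : r ⁻¹' {x}, ‖m0 y.1‖ ^ 2 = 1

/-- The low-pass condition on `m0` along the cycle `xc` with phases `α`, together with its
`β`-Lipschitz regularity there and the local constancy of the fibre cardinality. -/
structure IsLowPassFilter [MetricSpace X] (r : X → X) {p : ℕ} (xc : ZMod p → X) (α : ZMod p → ℂ)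
    (β : ℝ → ℝ) (m0 : X → ℂ) : Prop where
  norm_phase : ∀ i, ‖α i‖ = 1
  eventually_card_eq : ∀ i, ∀ᶠ y in 𝓝 (xc i), Nat.card (r ⁻¹' {y}) = Nat.card (r ⁻¹' {xc i})
  eventually_norm_sub_le : ∀ i, ∀ᶠ y in 𝓝 (xc i), ‖m0 y - m0 (xc i)‖ ≤ β (dist y (xc i))
  apply_cycle : ∀ i, m0 (xc i) = α i * (Real.sqrt (Nat.card (r ⁻¹' {r (xc i)})) : ℂ)

/-- The weight `W(y) = |m₀(y)|² / #r⁻¹(r(y))` of the random walk attached to the filter `m0`. -/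
def filterWeight (r : X → X) (m0 : X → ℂ) (y : X) : ℝ :=
  ‖m0 y‖ ^ 2 / (Nat.card (r ⁻¹' {r y}) : ℝ)

/-- The factor of the infinite product `scalingFn` at the point `y` with phase `α j`. -/
def scalingFactor (r : X → X) {p : ℕ} (α : ZMod p → ℂ) (m0 : X → ℂ) (j : ZMod p) (y : X) : ℂ :=
  (α j)⁻¹ * m0 y / (Real.sqrt (Nat.card (r ⁻¹' {r y})) : ℂ)

variable {r : X → X} {m0 : X → ℂ}

lemma filterWeight_nonneg (r : X → X) (m0 : X → ℂ) (y : X) : 0 ≤ filterWeight r m0 y := by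
  unfold filterWeight
  positivity

lemma norm_sq_scalingFactor {p : ℕ} {α : ZMod p → ℂ} (hα : ∀ i, ‖α i‖ = 1) (j : ZMod p) (y : X) :
    ‖scalingFactor r α m0 j y‖ ^ 2 = filterWeight r m0 y := by
  rw [scalingFactor, filterWeight, norm_div, norm_mul, norm_inv, hα, inv_one, one_mul,
    Complex.norm_of_nonneg (Real.sqrt_nonneg _), div_pow, Real.sq_sqrt (Nat.cast_nonneg _)]

lemma IsQuadratureFilter.tsum_filterWeight (hm0 : IsQuadratureFilter r m0) (x : X) :
    ∑' y : r ⁻¹' {x}, filterWeight r m0 y = 1 := by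
  rw [← hm0 x, ← tsum_mul_left]
  refine tsum_congr fun y => ?_
  have hy : r y.1 = x := y.2
  rw [filterWeight, hy, div_eq_inv_mul]

/- Two points with the same image carry total weight at most `1`. -/
lemma IsQuadratureFilter.injOn_half_lt_filterWeight (hm0 : IsQuadratureFilter r m0)
    (hfin : ∀ x, (r ⁻¹' {x}).Finite) : Set.InjOn r {y | 1 / 2 < filterWeight r m0 y} := by
  intro a ha b hb hab
  rw [Set.mem_ofPred_eq] at ha hb
  by_contra hne
  have := (hfin (r b)).fintype
  have hsum := hm0.tsum_filterWeight (r b)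
  rw [tsum_fintype] at hsum
  have hpair : (⟨a, hab⟩ : r ⁻¹' {r b}) ≠ ⟨b, rfl⟩ := fun h => hne (congrArg Subtype.val h)
  have hle := Finset.add_le_sum (fun (y : r ⁻¹' {r b}) _ => filterWeight_nonneg r m0 y)
    (Finset.mem_univ _) (Finset.mem_univ _) hpair
  linarith

namespace IsLowPassFilter

variable [MetricSpace X] {p : ℕ} {xc : ZMod p → X} {α : ZMod p → ℂ} {β : ℝ → ℝ}

lemma filterWeight_cycle (h : IsLowPassFilter r xc α β m0) (hfin : ∀ x, (r ⁻¹' {x}).Finite)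
    (i : ZMod p) : filterWeight r m0 (xc i) = 1 := by
  have hcard : (Nat.card (r ⁻¹' {r (xc i)}) : ℝ) ≠ 0 :=
    mod_cast Nat.one_le_iff_ne_zero.1 (one_le_card_fiber (hfin _) ⟨xc i, rfl⟩)
  rw [filterWeight, h.apply_cycle, norm_mul, h.norm_phase, one_mul,
    Complex.norm_of_nonneg (Real.sqrt_nonneg _), Real.sq_sqrt (Nat.cast_nonneg _), div_self hcard]

lemma eventually_card_map_eq (h : IsLowPassFilter r xc α β m0) (hC : IsRepellingCycle r xc)
    (i : ZMod p) :
    ∀ᶠ y in 𝓝 (xc i), Nat.card (r ⁻¹' {r y}) = Nat.card (r ⁻¹' {r (xc i)}) := by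
  have hi : r (xc i) = xc (i - 1) := by rw [← hC.map_succ (i - 1), sub_add_cancel]
  have hcont : Tendsto r (𝓝 (xc i)) (𝓝 (xc (i - 1))) := hi ▸ hC.continuousAt i
  rw [hi]
  exact hcont.eventually (h.eventually_card_eq (i - 1))

lemma eventually_half_lt_filterWeight (h : IsLowPassFilter r xc α β m0)
    (hC : IsRepellingCycle r xc) (hβ : IsSummableModulus β) (hfin : ∀ x, (r ⁻¹' {x}).Finite)
    (i : ZMod p) : ∀ᶠ y in 𝓝 (xc i), 1 / 2 < filterWeight r m0 y := by
  have hm0 := hβ.continuousAt_of_norm_sub_le (h.eventually_norm_sub_le i)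
  have hlim : Tendsto (fun y => ‖m0 y‖ ^ 2 / (Nat.card (r ⁻¹' {r (xc i)}) : ℝ)) (𝓝 (xc i))
      (𝓝 1) := by
    rw [← h.filterWeight_cycle hfin i]
    exact (hm0.norm.pow 2).div_const _
  filter_upwards [hlim.eventually (lt_mem_nhds one_half_lt_one), h.eventually_card_map_eq hC i]
    with y hy hcard
  rwa [filterWeight, hcard]

lemma norm_scalingFactor_sub_one_le (h : IsLowPassFilter r xc α β m0)
    (hfin : ∀ x, (r ⁻¹' {x}).Finite) {j : ZMod p} {y : X}
    (hcard : Nat.card (r ⁻¹' {r y}) = Nat.card (r ⁻¹' {r (xc j)})) :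
    ‖scalingFactor r α m0 j y - 1‖ ≤ ‖m0 y - m0 (xc j)‖ := by
  have hα : α j ≠ 0 := norm_ne_zero_iff.1 (by simp [h.norm_phase])
  have hsqrt : 1 ≤ √(Nat.card (r ⁻¹' {r y})) :=
    Real.one_le_sqrt.2 (mod_cast one_le_card_fiber (hfin _) ⟨y, rfl⟩)
  have hsqrt_ne : (√(Nat.card (r ⁻¹' {r y})) : ℂ) ≠ 0 :=
    mod_cast (zero_lt_one.trans_le hsqrt).ne'
  have hdiff : scalingFactor r α m0 j y - 1 =
      (α j)⁻¹ * (m0 y - m0 (xc j)) / (√(Nat.card (r ⁻¹' {r y})) : ℂ) := by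
    rw [scalingFactor, h.apply_cycle, ← hcard]
    field_simp
  rw [hdiff, norm_div, norm_mul, norm_inv, h.norm_phase, inv_one, one_mul,
    Complex.norm_of_nonneg (Real.sqrt_nonneg _)]
  exact div_le_self (norm_nonneg _) hsqrt

lemma multipliable_scalingFactor (h : IsLowPassFilter r xc α β m0) (hp : 0 < p)
    (hC : IsRepellingCycle r xc) (hβ : IsSummableModulus β) (hfin : ∀ x, (r ⁻¹' {x}).Finite)
    {z : Solenoid r} {i : ZMod p}
    (hz : Tendsto (fun n : ℕ => z.1 ((p : ℤ) * n)) atTop (𝓝 (xc i))) :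
    Multipliable fun k : ℕ => scalingFactor r α m0 (i + (k + 1 : ℕ)) (z.1 (k + 1)) := by
  have hsummable := (summable_nat_add_iff 1).2 (hC.summable_modulus_dist hp hβ hz)
  have hnear := (tendsto_add_atTop_nat 1).eventually (hC.eventually_coord hp hz fun j =>
    (h.eventually_card_map_eq hC j).and (h.eventually_norm_sub_le j))
  have hsub : Summable fun k : ℕ =>
      ‖scalingFactor r α m0 (i + (k + 1 : ℕ)) (z.1 (k + 1)) - 1‖ := by
    refine Summable.of_norm_bounded_eventually_nat hsummable ?_
    filter_upwards [hnear] with k hk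
    rw [norm_norm]
    exact (h.norm_scalingFactor_sub_one_le hfin hk.1).trans hk.2
  simpa using multipliable_one_add_of_summable hsub

lemma tendsto_prod_filterWeight (h : IsLowPassFilter r xc α β m0) (hp : 0 < p)
    (hC : IsRepellingCycle r xc) (hβ : IsSummableModulus β) (hfin : ∀ x, (r ⁻¹' {x}).Finite)
    {ι : Solenoid r → ZMod p} {z : Solenoid r}
    (hz : Tendsto (fun n : ℕ => z.1 ((p : ℤ) * n)) atTop (𝓝 (xc (ι z)))) :
    Tendsto (fun n : ℕ => ∏ k ∈ Finset.range n, ENNReal.ofReal (filterWeight r m0 (z.1 (k + 1))))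
      atTop (𝓝 (ENNReal.ofReal (‖scalingFn r α ι m0 z‖ ^ 2))) := by
  have hlim : Tendsto (fun n : ℕ => ∏ k ∈ Finset.range n,
      scalingFactor r α m0 (ι z + (k + 1 : ℕ)) (z.1 (k + 1))) atTop (𝓝 (scalingFn r α ι m0 z)) :=
    (h.multipliable_scalingFactor hp hC hβ hfin hz).hasProd.tendsto_prod_nat
  refine (ENNReal.tendsto_ofReal (hlim.norm.pow 2)).congr fun n => ?_
  rw [norm_prod, ← Finset.prod_pow, ENNReal.ofReal_prod_of_nonneg fun _ _ => sq_nonneg _]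
  simp only [norm_sq_scalingFactor h.norm_phase]

lemma countable_NC (h : IsLowPassFilter r xc α β m0) (hp : 0 < p) (hC : IsRepellingCycle r xc)
    (hβ : IsSummableModulus β) (hfin : ∀ x, (r ⁻¹' {x}).Finite) (hm0 : IsQuadratureFilter r m0)
    (x : X) : (NC r xc x).Countable := by
  refine Solenoid.countable_of_injOn hfin (hm0.injOn_half_lt_filterWeight hfin) x fun z hz => ?_
  obtain ⟨i, hi⟩ := hz.2
  exact ⟨hz.1, hC.eventually_coord hp hi (q := fun _ y => 1 / 2 < filterWeight r m0 y)
    (h.eventually_half_lt_filterWeight hC hβ hfin)⟩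

end IsLowPassFilter

end ScalingProduct

lemma IsStronglyInvariant.ae_forall_coord {X : Type*} [MeasurableSpace X] {r : X → X}
    {ρ : Measure X} [IsFiniteMeasure ρ] (hρ : IsStronglyInvariant r ρ)
    (hfin : ∀ x, (r ⁻¹' {x}).Finite) (hne : ∀ x, (r ⁻¹' {x}).Nonempty) {q : X → Prop}
    (hq : ∀ᵐ x ∂ρ, q x) : ∀ᵐ x ∂ρ, ∀ z : Solenoid r, z.1 0 = x → ∀ k : ℕ, q (z.1 k) := by
  filter_upwards [hρ.ae_forall_iterate_fiber hfin hne hq] with x hx z hz k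
  exact hx k _ ((z.iterate_coord k (by simp)).trans hz)

section FiberSum

variable {X Y : Type*} [MeasurableSpace X] [MeasurableSpace Y]

/-- `lam` integrates the counting measures of the fibres `N x` against `ρ`. The measure `λ_C` is the
case `N x = N_C(x)`. -/
def IsFiberSum (N : X → Set Y) (ρ : Measure X) (lam : Measure Y) : Prop :=
  ∀ F : Y → ℝ≥0∞, Measurable F → ∫⁻ y, F y ∂lam = ∫⁻ x, ∑' ω : N x, F ω.1 ∂ρ

namespace IsFiberSum

variable {N : X → Set Y} {ρ : Measure X} {lam : Measure Y}

lemma ae_mem (hlam : IsFiberSum N ρ lam) {s : Set Y} (hs : MeasurableSet s)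
    (hN : ∀ᵐ x ∂ρ, N x ⊆ s) : ∀ᵐ y ∂lam, y ∈ s := by
  change lam sᶜ = 0
  rw [← lintegral_indicator_one hs.compl, hlam _ (measurable_one.indicator hs.compl)]
  refine (lintegral_congr_ae ?_).trans lintegral_zero
  filter_upwards [hN] with x hx
  refine ENNReal.tsum_eq_zero.2 fun ω => Set.indicator_of_notMem ?_ _
  exact not_not.2 (hx ω.2)

lemma map_withDensity (hlam : IsFiberSum N ρ lam) {π : Y → X} (hπ : Measurable π)
    (hN : ∀ x, ∀ y ∈ N x, π y = x) {Ψ : Y → ℝ≥0∞} (hΨ : Measurable Ψ) {h : X → ℝ≥0∞}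
    (hsum : ∀ᵐ x ∂ρ, ∑' ω : N x, Ψ ω = h x) :
    (lam.withDensity Ψ).map π = ρ.withDensity h := by
  ext s hs
  rw [Measure.map_apply hπ hs, withDensity_apply _ (hπ hs), withDensity_apply _ hs,
    ← lintegral_indicator (hπ hs), ← lintegral_indicator hs, hlam _ (hΨ.indicator (hπ hs))]
  refine lintegral_congr_ae ?_
  filter_upwards [hsum] with x hx
  have hmem (ω : N x) : ω.1 ∈ π ⁻¹' s ↔ x ∈ s := by rw [Set.mem_preimage, hN x ω ω.2]
  by_cases hxs : x ∈ s
  · rw [Set.indicator_of_mem hxs, ← hx]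
    exact tsum_congr fun ω => Set.indicator_of_mem ((hmem ω).2 hxs) _
  · rw [Set.indicator_of_notMem hxs]
    exact ENNReal.tsum_eq_zero.2 fun ω => Set.indicator_of_notMem (mt (hmem ω).1 hxs) _

lemma integrable_and_integral_eq (hlam : IsFiberSum N ρ lam) {π : Y → X} (hπ : Measurable π)
    (hN : ∀ x, ∀ y ∈ N x, π y = x) {Ψ : Y → ℝ≥0∞} (hΨ_top : ∀ y, Ψ y < ∞) {s : Set Y}
    (hs : MeasurableSet s) (hNs : ∀ᵐ x ∂ρ, N x ⊆ s) (hΨ : Measurable (s.indicator Ψ))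
    {h : X → ℝ≥0∞} (hh : AEMeasurable h ρ) (hh₁ : ∀ x, h x ≤ 1)
    (hsum : ∀ x, ∑' ω : N x, Ψ ω = h x) {E : Type*} [NormedAddCommGroup E] [NormedSpace ℝ E]
    {f : X → E} (hf : Integrable f ρ) :
    Integrable (fun y => (Ψ y).toReal • f (π y)) lam ∧
      ∫ y, (Ψ y).toReal • f (π y) ∂lam = ∫ x, (h x).toReal • f x ∂ρ := by
  have hind : s.indicator Ψ =ᵐ[lam] Ψ := by
    filter_upwards [hlam.ae_mem hs hNs] with y hy using Set.indicator_of_mem hy Ψ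
  have hΨ_ae : AEMeasurable Ψ lam := hΨ.aemeasurable.congr hind
  have hmap : (lam.withDensity Ψ).map π = ρ.withDensity h := by
    rw [← withDensity_congr_ae hind]
    refine hlam.map_withDensity hπ hN hΨ ?_
    filter_upwards [hNs] with x hx
    rw [← hsum x]
    exact tsum_congr fun ω => Set.indicator_of_mem (hx ω.2) Ψ
  have hle : ρ.withDensity h ≤ ρ :=
    (withDensity_mono (.of_forall hh₁)).trans_eq withDensity_one
  have hf' : Integrable f ((lam.withDensity Ψ).map π) := hmap ▸ hf.mono_measure hle
  constructor
  · rw [← integrable_withDensity_iff_integrable_smul₀' hΨ_ae (.of_forall hΨ_top)]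
    exact hf'.comp_measurable hπ
  · rw [← integral_withDensity_eq_integral_toReal_smul₀ hΨ_ae (.of_forall hΨ_top),
      ← integral_map hπ.aemeasurable hf'.aestronglyMeasurable, hmap,
      integral_withDensity_eq_integral_toReal_smul₀ hh
        (.of_forall fun x => (hh₁ x).trans_lt one_lt_top)]

end IsFiberSum

end FiberSum

section ScalingFunction

variable {X : Type*} [MetricSpace X] [MeasurableSpace X] [OpensMeasurableSpace X] {r : X → X}
  {m0 : X → ℂ} {p : ℕ} {xc : ZMod p → X} {α : ZMod p → ℂ} {β : ℝ → ℝ} {ι : Solenoid r → ZMod p}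
  {P : X → Measure (Solenoid r)} {ρ : Measure X}

lemma measurableSet_tendsto_cycle (hp : 0 < p) (xc : ZMod p → X) : MeasurableSet
    {z : Solenoid r | ∃ i, Tendsto (fun n : ℕ => z.1 ((p : ℤ) * n)) atTop (𝓝 (xc i))} := by
  have : NeZero p := ⟨hp.ne'⟩
  rw [Set.ofPred_exists]
  exact .iUnion fun i => measurableSet_tendsto _ fun n => Solenoid.measurable_coord _

lemma aemeasurable_filterWeight [SecondCountableTopology X] [IsFiniteMeasure ρ]
    (hr : Measurable r) (hfin : ∀ x, (r ⁻¹' {x}).Finite) (hne : ∀ x, (r ⁻¹' {x}).Nonempty)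
    (hρ : IsStronglyInvariant r ρ) (hm0 : Measurable m0) :
    AEMeasurable (filterWeight r m0) ρ := by
  have hcard : AEMeasurable (fun y => (Nat.card (r ⁻¹' {r y}) : ℝ)) ρ :=
    measurable_from_nat.comp_aemeasurable
      ((hρ.aemeasurable_card_fiber hfin hne).comp_quasiMeasurePreserving
        (hρ.quasiMeasurePreserving hr hfin hne))
  exact (hm0.norm.pow_const 2).aemeasurable.div hcard

lemma IsPathMeasureFamily.aemeasurable_measure_NC [IsFiniteMeasure ρ]
    (hr : Measurable r) (hfin : ∀ x, (r ⁻¹' {x}).Finite) (hne : ∀ x, (r ⁻¹' {x}).Nonempty)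
    (hρ : IsStronglyInvariant r ρ) (hm0 : Measurable m0) (hp : 0 < p) (xc : ZMod p → X)
    (hP : IsPathMeasureFamily r (fun y => ENNReal.ofReal (filterWeight r m0 y)) P) :
    AEMeasurable (fun x => P x (NC r xc x)) ρ := by
  have hNC (x : X) : P x (NC r xc x) = P x {z : Solenoid r |
      ∃ i, Tendsto (fun n : ℕ => z.1 ((p : ℤ) * n)) atTop (𝓝 (xc i))} := by
    refine measure_congr ?_
    filter_upwards [hP.ae_start x] with z hz
    exact propext (and_iff_right hz)
  have hW : (fun y => ENNReal.ofReal (filterWeight r m0 y)) =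
      fun y => ENNReal.ofReal (‖m0 y‖ ^ 2) / Nat.card (r ⁻¹' {r y}) := by
    ext y
    rw [filterWeight, ENNReal.ofReal_div_of_pos
      (mod_cast one_le_card_fiber (hfin (r y)) ⟨y, rfl⟩), ENNReal.ofReal_natCast]
  rw [hW] at hP
  simp only [hNC]
  exact hP.aemeasurable_measure hr hfin hne hρ (hm0.norm.pow_const 2).ennreal_ofReal
    (measurableSet_tendsto_cycle hp xc)

namespace IsLowPassFilter

lemma tsum_norm_sq_scalingFn (h : IsLowPassFilter r xc α β m0) (hp : 0 < p)
    (hC : IsRepellingCycle r xc) (hβ : IsSummableModulus β) (hfin : ∀ x, (r ⁻¹' {x}).Finite)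
    (hm0 : IsQuadratureFilter r m0)
    (hι : ∀ x, ∀ ω ∈ NC r xc x,
      Tendsto (fun n : ℕ => ω.1 ((p : ℤ) * n)) atTop (𝓝 (xc (ι ω))))
    (hP : IsPathMeasureFamily r (fun y => ENNReal.ofReal (filterWeight r m0 y)) P) (x : X) :
    ∑' ω : NC r xc x, ENNReal.ofReal (‖scalingFn r α ι m0 ω.1‖ ^ 2) = P x (NC r xc x) := by
  have hsingleton (ω : NC r xc x) :
      ENNReal.ofReal (‖scalingFn r α ι m0 ω.1‖ ^ 2) = P x {ω.1} :=
    tendsto_nhds_unique (h.tendsto_prod_filterWeight hp hC hβ hfin (hι x ω.1 ω.2))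
      (hP.tendsto_prod ω.2.1)
  simp only [hsingleton]
  exact tsum_measure_preimage_singleton (h.countable_NC hp hC hβ hfin hm0 x) (f := id)
    fun ω _ => measurableSet_singleton ω

/- `scalingFn` itself need not be measurable, as neither `ι` nor the fibre cardinality is; on the
paths along which `filterWeight` agrees with a Borel version of itself, its square modulus is a
limit of Borel functions. -/
lemma exists_measurable_indicator_norm_sq_scalingFn [IsFiniteMeasure ρ]
    (h : IsLowPassFilter r xc α β m0) (hp : 0 < p) (hC : IsRepellingCycle r xc)
    (hβ : IsSummableModulus β) (hfin : ∀ x, (r ⁻¹' {x}).Finite)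
    (hne : ∀ x, (r ⁻¹' {x}).Nonempty) (hρ : IsStronglyInvariant r ρ)
    (hW : AEMeasurable (filterWeight r m0) ρ)
    (hι : ∀ x, ∀ ω ∈ NC r xc x,
      Tendsto (fun n : ℕ => ω.1 ((p : ℤ) * n)) atTop (𝓝 (xc (ι ω)))) :
    ∃ s : Set (Solenoid r), MeasurableSet s ∧ (∀ᵐ x ∂ρ, NC r xc x ⊆ s) ∧
      Measurable (s.indicator fun z => ENNReal.ofReal (‖scalingFn r α ι m0 z‖ ^ 2)) := by
  obtain ⟨t, ht, htm, ht0⟩ := exists_measurable_superset_of_null (ae_iff.1 hW.ae_eq_mk)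
  have heq {y : X} (hy : y ∉ t) : filterWeight r m0 y = hW.mk _ y :=
    not_not.1 fun hne => hy (ht hne)
  let s : Set (Solenoid r) :=
    {z | ∃ i, Tendsto (fun n : ℕ => z.1 ((p : ℤ) * n)) atTop (𝓝 (xc i))} ∩
      ⋂ k : ℕ, {z | z.1 k ∉ t}
  have hs : MeasurableSet s := (measurableSet_tendsto_cycle hp xc).inter
    (.iInter fun k => Solenoid.measurable_coord k htm.compl)
  refine ⟨s, hs, ?_, ?_⟩
  · filter_upwards [hρ.ae_forall_coord hfin hne (measure_eq_zero_iff_ae_notMem.1 ht0)]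
      with x hx z hz
    exact ⟨hz.2, Set.mem_iInter.2 (hx z hz.1)⟩
  let Ψ (z : Solenoid r) : ℝ≥0∞ := liminf
    (fun n => ∏ k ∈ Finset.range n, ENNReal.ofReal (hW.mk _ (z.1 (k + 1)))) atTop
  have hΨ : Measurable Ψ := .liminf fun n => Finset.measurable_prod _ fun k _ =>
    (hW.measurable_mk.comp (Solenoid.measurable_coord _)).ennreal_ofReal
  have hΨs : Set.EqOn (fun z => ENNReal.ofReal (‖scalingFn r α ι m0 z‖ ^ 2)) Ψ s := by
    rintro z ⟨hz, hzt⟩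
    have hlim := h.tendsto_prod_filterWeight hp hC hβ hfin (hι _ z ⟨rfl, hz⟩)
    have hk (k : ℕ) : filterWeight r m0 (z.1 (k + 1)) = hW.mk _ (z.1 (k + 1)) :=
      heq (Set.mem_iInter.1 hzt (k + 1))
    simp only [hk] at hlim
    exact hlim.liminf_eq.symm
  rw [Set.indicator_congr hΨs]
  exact hΨ.indicator hs

end IsLowPassFilter

end ScalingFunction

theorem statement10_general
    {X : Type*} [MetricSpace X] [SecondCountableTopology X] [MeasurableSpace X]
    [OpensMeasurableSpace X] {r : X → X} (hr : Measurable r)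
    (hfin : ∀ x, (r ⁻¹' {x}).Finite) (hne : ∀ x, (r ⁻¹' {x}).Nonempty)
    {ρ : Measure X} [IsFiniteMeasure ρ] (hρ : IsStronglyInvariant r ρ)
    {p : ℕ} (hp : 0 < p) {xc : ZMod p → X} (hC : IsRepellingCycle r xc)
    {lamC : Measure (Solenoid r)} (hlam : IsFiberSum (NC r xc) ρ lamC)
    {ι : Solenoid r → ZMod p}
    (hι : ∀ x, ∀ ω ∈ NC r xc x,
      Tendsto (fun n : ℕ => ω.1 ((p : ℤ) * n)) atTop (𝓝 (xc (ι ω))))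
    {α : ZMod p → ℂ} {β : ℝ → ℝ} (hβ : IsSummableModulus β)
    {m0 : X → ℂ} (hm0 : Measurable m0) (hqmf : IsQuadratureFilter r m0)
    (hlow : IsLowPassFilter r xc α β m0)
    {P : X → Measure (Solenoid r)}
    (hP : IsPathMeasureFamily r (fun y => ENNReal.ofReal (filterWeight r m0 y)) P) :
    (∀ i, filterWeight r m0 (xc i) = 1) ∧
    (∀ x, ∑' ω : NC r xc x, ENNReal.ofReal (‖scalingFn r α ι m0 ω.1‖ ^ 2) = P x (NC r xc x)) ∧
    ∀ f : X → ℂ, Integrable f ρ →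
      Integrable (fun z => f (z.1 0) * ((‖scalingFn r α ι m0 z‖ ^ 2 : ℝ) : ℂ)) lamC ∧
      ∫ z, f (z.1 0) * ((‖scalingFn r α ι m0 z‖ ^ 2 : ℝ) : ℂ) ∂lamC
        = ∫ x, f x * (((P x (NC r xc x)).toReal : ℝ) : ℂ) ∂ρ := by
  have hsum := hlow.tsum_norm_sq_scalingFn hp hC hβ hfin hqmf hι hP
  refine ⟨hlow.filterWeight_cycle hfin, hsum, fun f hf => ?_⟩
  obtain ⟨s, hs, hNs, hmeas⟩ := hlow.exists_measurable_indicator_norm_sq_scalingFn hp hC hβ hfin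
    hne hρ (aemeasurable_filterWeight hr hfin hne hρ hm0) hι
  have hh := hP.aemeasurable_measure_NC hr hfin hne hρ hm0 hp xc
  have hh₁ (x : X) : P x (NC r xc x) ≤ 1 := by
    have := hP.1 x
    exact prob_le_one
  simpa only [ENNReal.toReal_ofReal (sq_nonneg _), Complex.real_smul, mul_comm] using
    hlam.integrable_and_integral_eq (Solenoid.measurable_coord 0) (fun _ _ hz => hz.1)
      (fun _ => ofReal_lt_top) hs hNs hmeas hh hh₁ hsum hf

theorem statement10
    {X : Type*} [MetricSpace X] [CompactSpace X] [MeasurableSpace X] [BorelSpace X]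
    (r : X → X) (hr : Measurable r)
    (hfin : ∀ x : X, (r ⁻¹' {x}).Finite) (hne : ∀ x : X, (r ⁻¹' {x}).Nonempty)
    (ρ : Measure X) [IsProbabilityMeasure ρ]
    (hsi : ∀ f : X → ℝ, Measurable f → (∃ M : ℝ, ∀ x, |f x| ≤ M) →
      ∫ x, f x ∂ρ = ∫ x, (Nat.card (r ⁻¹' {x}) : ℝ)⁻¹ * ∑' y : r ⁻¹' {x}, f y.1 ∂ρ)
    {p : ℕ} (hp : 0 < p) (xc : ZMod p → X) (hxc : Function.Injective xc)
    (hcyc : ∀ i : ZMod p, r (xc (i + 1)) = xc i)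
    (lamC : Measure (Solenoid r))
    (hlam : ∀ F : Solenoid r → ℝ≥0∞, Measurable F →
      ∫⁻ z, F z ∂lamC = ∫⁻ x, ∑' ω : NC r xc x, F ω.1 ∂ρ)
    (α : ZMod p → ℂ) (hα : ∀ i, ‖α i‖ = 1)
    (ι : Solenoid r → ZMod p)
    (hι : ∀ x : X, ∀ ω ∈ NC r xc x,
      Tendsto (fun n : ℕ => ω.1 ((p : ℤ) * (n : ℤ))) atTop (𝓝 (xc (ι ω))))
    (hrep : ∀ i : ZMod p, ∃ c δ : ℝ, 0 < c ∧ c < 1 ∧ 0 < δ ∧ ∀ x : X,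
      0 < dist x (xc i) → dist x (xc i) < δ → c⁻¹ * dist x (xc i) < dist (r^[p] x) (xc i))
    (hrc : ∀ i : ZMod p, ContinuousAt r (xc i))
    (hcc : ∀ i : ZMod p, ∀ᶠ y in 𝓝 (xc i), Nat.card (r ⁻¹' {y}) = Nat.card (r ⁻¹' {xc i}))
    (m0 : X → ℂ) (hm0m : Measurable m0) (hm0b : ∃ M : ℝ, ∀ x, ‖m0 x‖ ≤ M)
    (β : ℝ → ℝ) (hβmono : MonotoneOn β (Set.Ici 0)) (hβ0 : ∀ t : ℝ, 0 ≤ t → 0 ≤ β t)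
    (hβsum : ∀ A : ℝ, 0 < A → ∀ c : ℝ, 0 < c → c < 1 →
      Summable fun k : ℕ => β (A * c ^ (k + 1)))
    (hβlip : ∀ i : ZMod p, ∀ᶠ y in 𝓝 (xc i), ‖m0 y - m0 (xc i)‖ ≤ β (dist y (xc i)))
    (hqmf : ∀ x : X,
      (Nat.card (r ⁻¹' {x}) : ℝ)⁻¹ * ∑' y : r ⁻¹' {x}, ‖m0 y.1‖ ^ 2 = 1)
    (hlp : ∀ i : ZMod p, m0 (xc i) = α i * (Real.sqrt (Nat.card (r ⁻¹' {r (xc i)})) : ℂ))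
    (P : X → Measure (Solenoid r))
    (hP : IsPathMeasureFamily r
      (fun y => ENNReal.ofReal (‖m0 y‖ ^ 2 / (Nat.card (r ⁻¹' {r y}) : ℝ))) P) :
    (∀ i : ZMod p, ‖m0 (xc i)‖ ^ 2 / (Nat.card (r ⁻¹' {r (xc i)}) : ℝ) = 1) ∧
    (∀ x : X, ∑' ω : NC r xc x, ENNReal.ofReal (‖scalingFn r α ι m0 ω.1‖ ^ 2)
        = P x (NC r xc x)) ∧
    (∀ f : X → ℂ, Measurable f → (∃ M : ℝ, ∀ x, ‖f x‖ ≤ M) →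
      ∫ z, f (z.1 0) * ((‖scalingFn r α ι m0 z‖ ^ 2 : ℝ) : ℂ) ∂lamC
        = ∫ x, f x * (((P x (NC r xc x)).toReal : ℝ) : ℂ) ∂ρ) := by
  have hC : IsRepellingCycle r xc := ⟨hcyc, hrc, hrep⟩
  have hlow : IsLowPassFilter r xc α β m0 := ⟨hα, hcc, hβlip, hlp⟩
  obtain ⟨hcycle, hsum, hint⟩ := statement10_general hr hfin hne hsi hp hC hlam hι
    ⟨hβmono, hβ0, hβsum⟩ hm0m hqmf hlow hP
  exact ⟨hcycle, hsum, fun f hf ⟨M, hM⟩ =>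
    (hint f (.of_bound hf.aestronglyMeasurable M (.of_forall hM))).2⟩
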